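/- Let k ≥ 2 be even and let m ≥ 7 be odd. Set c = m−3 and d = m−5 if m ≡ 1 (mod 4), and c = m−2 and d = m−3 if m ≡ 3 (mod 4). Suppose there exists an edge 2-coloring of the complete graph on n vertices with no monochromatic copy of the kipas K̂_m. Then there exists a Gallai k-coloring of the complete graph on n + 5c(5^((k−2)/2) − 1) − d(k−2) vertices with no monochromatic copy of K̂_m. Consequently GR_k(K̂_m) ≥ R_2(K̂_m) + 5c(5^((k−2)/2) − 1) − d(k−2). -/

import Mathlib

open SimpleGraph

/-- A monochromatic copy of `H` in the graph `G` edge-colored by `c`: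
an injective map sending edges of `H` to edges of `G`, all image edges of one color. -/
def IsMonoCopy {α V : Type*} {k : ℕ} (G : SimpleGraph V) (c : V → V → Fin k)
    (H : SimpleGraph α) : Prop :=
  ∃ (f : α → V) (i : Fin k), Function.Injective f ∧
    ∀ a b, H.Adj a b → G.Adj (f a) (f b) ∧ c (f a) (f b) = i

/-- The edge coloring `c` of `G` has no rainbow triangle. -/
def NoRainbowTriangle {V : Type*} {k : ℕ} (G : SimpleGraph V) (c : V → V → Fin k) : Prop :=
  ¬ ∃ x y z : V, G.Adj x y ∧ G.Adj y z ∧ G.Adj x z ∧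
    c x y ≠ c y z ∧ c y z ≠ c x z ∧ c x y ≠ c x z

/-- The Gallai–Ramsey number `GR_k(H)`: the least `N` such that every
rainbow-triangle-free `k`-edge-coloring of the complete graph on `N` vertices
contains a monochromatic copy of `H`. -/
noncomputable def GallaiRamsey (k : ℕ) {α : Type*} (H : SimpleGraph α) : ℕ :=
  sInf {N | ∀ c : Fin N → Fin N → Fin k, (∀ x y, c x y = c y x) →
    NoRainbowTriangle (⊤ : SimpleGraph (Fin N)) c →
    IsMonoCopy (⊤ : SimpleGraph (Fin N)) c H}

/-- The diagonal two-color Ramsey number `R(H, H)`. -/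
noncomputable def Ramsey2 {α : Type*} (H : SimpleGraph α) : ℕ :=
  sInf {N | ∀ c : Fin N → Fin N → Fin 2, (∀ x y, c x y = c y x) →
    IsMonoCopy (⊤ : SimpleGraph (Fin N)) c H}

/-- The fan `F_3 = K_1 + 3K_2`: vertex `0` is the center, joined to all other
vertices, together with the three disjoint edges `12`, `34`, `56`. -/
def fanF3 : SimpleGraph (Fin 7) :=
  SimpleGraph.fromRel (fun a b => a = 0 ∨ (a.val % 2 = 1 ∧ b.val = a.val + 1))

/-- The kipas `K̂_m = K_1 + P_m`: vertex `0` is the center, joined to all other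
vertices, and `1, 2, …, m` form a path. -/
def kipasG (m : ℕ) : SimpleGraph (Fin (m + 1)) :=
  SimpleGraph.fromRel (fun a b => a = 0 ∨ (1 ≤ a.val ∧ b.val = a.val + 1))

/-- The wheel `W_m = K_1 + C_m`: vertex `0` is the center, joined to all other
vertices, and `1, 2, …, m` form a cycle. -/
def wheelG (m : ℕ) : SimpleGraph (Fin (m + 1)) :=
  SimpleGraph.fromRel (fun a b =>
    a = 0 ∨ (1 ≤ a.val ∧ b.val = a.val + 1) ∨ (a.val = m ∧ b.val = 1))

/-- The star `K_{1,n}`: vertex `0` is the center, joined to all other vertices. -/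
def starG (n : ℕ) : SimpleGraph (Fin (n + 1)) :=
  SimpleGraph.fromRel (fun a _ => a = 0)

/-- `K⁺_{1,n}`, the star `K_{1,n}` with one edge subdivided: vertex `0` is joined to
`1, …, n`, and the extra vertex `n+1` is joined to `n`. -/
def starPlusG (n : ℕ) : SimpleGraph (Fin (n + 2)) :=
  SimpleGraph.fromRel (fun a b => (a = 0 ∧ b.val ≤ n) ∨ (a.val = n ∧ b.val = n + 1))

/-- The complete graph on `Fin N` with the single edge `{0, 1}` deleted. -/
def compMinusEdge (N : ℕ) : SimpleGraph (Fin N) where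
  Adj x y := x ≠ y ∧ ¬(x.val = 0 ∧ y.val = 1) ∧ ¬(x.val = 1 ∧ y.val = 0)
  symm := by
    constructor
    intro x y h
    exact ⟨h.1.symm, fun hc => h.2.2 ⟨hc.2, hc.1⟩, fun hc => h.2.1 ⟨hc.2, hc.1⟩⟩
  loopless := by constructor; intro x h; exact h.1 rfl

/-- The complete graph on `Fin M` together with one extra vertex (`none`)
joined exactly to the vertices of `A`. -/
def addVertex (M : ℕ) (A : Set (Fin M)) : SimpleGraph (Option (Fin M)) where
  Adj x y := (∃ a b : Fin M, x = some a ∧ y = some b ∧ a ≠ b) ∨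
    (∃ a ∈ A, (x = some a ∧ y = none) ∨ (x = none ∧ y = some a))
  symm := by
    constructor
    rintro x y (⟨a, b, hx, hy, hab⟩ | ⟨a, ha, (⟨hx, hy⟩ | ⟨hx, hy⟩)⟩)
    · exact Or.inl ⟨b, a, hy, hx, hab.symm⟩
    · exact Or.inr ⟨a, ha, Or.inr ⟨hy, hx⟩⟩
    · exact Or.inr ⟨a, ha, Or.inl ⟨hy, hx⟩⟩
  loopless := by
    constructor
    rintro x (⟨a, b, hx, hy, hab⟩ | ⟨a, ha, (⟨hx, hy⟩ | ⟨hx, hy⟩)⟩) <;> simp_all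

/-- The star-critical Gallai–Ramsey number `GR*_k(H)`: the least `s` such that
every rainbow-triangle-free `k`-edge-coloring of the complete graph on
`GR_k(H) - 1` vertices plus one extra vertex joined to exactly `s` of them
contains a monochromatic copy of `H`. -/
noncomputable def GRstar (k : ℕ) {α : Type*} (H : SimpleGraph α) : ℕ :=
  sInf {s | ∀ A : Finset (Fin (GallaiRamsey k H - 1)), A.card = s →
    ∀ c : Option (Fin (GallaiRamsey k H - 1)) → Option (Fin (GallaiRamsey k H - 1)) → Fin k,
      (∀ x y, c x y = c y x) →
      NoRainbowTriangle (addVertex (GallaiRamsey k H - 1) (↑A)) c →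
      IsMonoCopy (addVertex (GallaiRamsey k H - 1) (↑A)) c H}

/-- `H` is Gallai-Ramsey-full for `k` colors: the complete graph on `GR_k(H)`
vertices minus one edge admits a rainbow-triangle-free `k`-edge-coloring with
no monochromatic copy of `H`. -/
def GallaiRamseyFull (k : ℕ) {α : Type*} (H : SimpleGraph α) : Prop :=
  ∃ c : Fin (GallaiRamsey k H) → Fin (GallaiRamsey k H) → Fin k,
    (∀ x y, c x y = c y x) ∧
    NoRainbowTriangle (compMinusEdge (GallaiRamsey k H)) c ∧
    ¬ IsMonoCopy (compMinusEdge (GallaiRamsey k H)) c H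

/-- Reachability inside the vertex set `s`: there is a walk all of whose
vertices lie in `s`. -/
def ReachableWithin {V : Type*} (R : SimpleGraph V) (s : Set V) (u v : V) : Prop :=
  ∃ w : R.Walk u v, ∀ x ∈ w.support, x ∈ s

/-!
Write `h = ⌊m/2⌋`. Two new colors at a time are added by substituting five smaller colorings into
the pentagon `C₅`, one new color being used between the parts along `C₅` and the other along its
complement. Both pentagons are triangle-free, so each new color may also occur inside two parts that
are not adjacent in its pentagon, provided that it contains there neither a path `P_m` nor a star
`K_{1,h}`. Indeed, consider a kipas in a new color. If its center lies in a part without that color,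
then its whole rim lies in a single part, which contains a `P_m`. Otherwise one of any two
consecutive rim vertices lies in the part of the center, which contains a `K_{1,h}`.

With `F` the set of the `2j` colors used so far, let `A j` be the order of a good coloring in `F`,
`B j` that of a good coloring with one further, sparse color, and `C j` that with two such colors.
Of the five parts of a pentagon, two can also make sparse use of the first new color and two of the
second, so that `C (j + 1) = 5 * C j`, `B (j + 1) = B j + 4 * C j` and
`A (j + 1) = A j + 4 * B j`, starting from `C 0 = c`, `B 0 = h` and `A 1 = n`. Here `K_c` is split
into two regular graphs of degree less than `h`: the best possible `c` is `2h - 1` if `h` is odd,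
and `2h - 2` if `h` is even, because a regular graph of odd degree has an even number of vertices.
The constant `d = 2c - 2h` is the deficit that accumulates from `B 0 = h` in place of `c`.
-/

section FreeGraphs

variable {α V : Type*} {A : SimpleGraph α} {G : SimpleGraph V} {m n : ℕ}

theorem free_of_card_lt [Fintype α] [Fintype V] (h : Fintype.card V < Fintype.card α) :
    A.Free G := fun ⟨f⟩ ↦ h.not_ge (Fintype.card_le_of_injective f f.injective)

theorem starG_connected (n : ℕ) : (starG n).Connected := connected_starGraph 0

theorem starG_ne_bot (hn : 0 < n) : starG n ≠ ⊥ :=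
  ne_bot_iff_exists_adj.mpr
    ⟨0, Fin.last n, starGraph_center_adj (Fin.ext_iff.not.mpr hn.ne)⟩

theorem pathGraph_ne_bot (hm : 2 ≤ m) : pathGraph m ≠ ⊥ :=
  ne_bot_iff_exists_adj.mpr ⟨⟨0, by lia⟩, ⟨1, hm⟩, by simp [pathGraph_adj]⟩

theorem starG_isContained {v : V} {f : Fin n → V} (hf : f.Injective) (hv : ∀ s, G.Adj v (f s)) :
    starG n ⊑ G := by
  refine ⟨⟨⟨Fin.cons v f, fun {s t} hst ↦ ?_⟩, ?_⟩⟩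
  · cases s using Fin.cases <;> cases t using Fin.cases <;>
      simp_all [starG, G.adj_comm]
  · exact Fin.cons_injective_iff.mpr ⟨fun ⟨s, hs⟩ ↦ (hv s).ne hs.symm, hf⟩

theorem starG_free_of_degree_lt [G.LocallyFinite] (h : ∀ v, G.degree v < n) :
    (starG n).Free G := by
  rintro ⟨f⟩
  have hdeg := Copy.degree_le (G := starGraph (0 : Fin (n + 1))) f 0
  rw [degree_starGraph_center, Fintype.card_fin, Nat.add_sub_cancel] at hdeg
  exact (h (f 0)).not_ge hdeg

theorem kipasG_adj_zero_succ (s : Fin m) : (kipasG m).Adj 0 s.succ := by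
  simp [kipasG, (Fin.succ_ne_zero s).symm]

theorem kipasG_adj_succ_succ {s t : Fin m} :
    (kipasG m).Adj s.succ t.succ ↔ (pathGraph m).Adj s t := by
  simp only [kipasG, fromRel_adj, pathGraph_adj, ne_eq, Fin.ext_iff, Fin.val_succ, Fin.val_zero]
  lia

theorem kipasG_connected (m : ℕ) : (kipasG m).Connected :=
  .of_isUniversal (v := 0) fun {s} hs ↦ by
    obtain ⟨t, rfl⟩ := Fin.exists_succ_eq.mpr hs.symm
    exact kipasG_adj_zero_succ t

/-- The path `P_m` on the non-central vertices of the kipas. -/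
def kipasRim (m : ℕ) : Copy (pathGraph m) (kipasG m) :=
  ⟨⟨Fin.succ, kipasG_adj_succ_succ.mpr⟩, Fin.succ_injective m⟩

theorem exists_injective_of_forall_pathGraph_adj {P : Fin m → Prop}
    (hP : ∀ s t, (pathGraph m).Adj s t → P s ∨ P t) :
    ∃ f : Fin (m / 2) → Fin m, f.Injective ∧ ∀ r, P (f r) := by
  have hpair (r : Fin (m / 2)) : ∃ s : Fin m, s.val / 2 = r ∧ P s := by
    rcases hP ⟨2 * r, by lia⟩ ⟨2 * r + 1, by lia⟩ (by simp [pathGraph_adj]) with h | h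
    · exact ⟨_, by simp, h⟩
    · exact ⟨_, by dsimp only; lia, h⟩
  choose f hf hPf using hpair
  exact ⟨f, fun r r' h ↦ Fin.ext (by rw [← hf, ← hf, h]), hPf⟩

end FreeGraphs

section Circulant

theorem isRegularOfDegree_circulantGraph {A : Type*} [AddGroup A] [Fintype A] [DecidableEq A]
    {D : Finset A} (hzero : 0 ∉ D) (hneg : ∀ x ∈ D, -x ∈ D) :
    (circulantGraph (D : Set A)).IsRegularOfDegree D.card := by
  intro v
  rw [← card_neighborFinset_eq_degree, ← Finset.card_map (s := D) (Equiv.addRight v).toEmbedding]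
  congr 1
  ext w
  have hsymm : v - w ∈ D ↔ w - v ∈ D :=
    ⟨fun h ↦ neg_sub v w ▸ hneg _ h, fun h ↦ neg_sub w v ▸ hneg _ h⟩
  have hne : v - w ∈ D → v ≠ w := by rintro h rfl; exact hzero (sub_self v ▸ h)
  rw [mem_neighborFinset, Finset.mem_map_equiv, circulantGraph_adj]
  simp only [Finset.mem_coe, Equiv.addRight_symm, Equiv.coe_addRight, ← sub_eq_add_neg]
  tauto

theorem exists_isRegularOfDegree_two_mul {t c : ℕ} (h : 2 * t < c) :
    ∃ (G : SimpleGraph (Fin c)) (_ : DecidableRel G.Adj), G.IsRegularOfDegree (2 * t) := by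
  obtain ⟨c, rfl⟩ := Nat.exists_eq_add_one_of_ne_zero (by lia : c ≠ 0)
  let u : Fin (c + 1) := ⟨t, by lia⟩
  have hdisj : Disjoint (Finset.Ioc 0 u) (Finset.Ioi u.rev) := by
    simp only [Finset.disjoint_left, Finset.mem_Ioc, Finset.mem_Ioi, Fin.lt_def, Fin.le_def,
      Fin.val_rev, u]
    lia
  have hcard : (Finset.disjUnion _ _ hdisj).card = 2 * t := by
    rw [Finset.card_disjUnion, Fin.card_Ioc, Fin.card_Ioi, Fin.val_rev, Fin.val_zero]
    lia
  rw [← hcard]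
  refine ⟨_, inferInstance, isRegularOfDegree_circulantGraph (by simp) fun x hx ↦ ?_⟩
  simp only [Finset.mem_disjUnion, Finset.mem_Ioc, Finset.mem_Ioi, Fin.lt_def, Fin.le_def,
    Fin.val_rev, Fin.val_neg, Fin.val_zero, ← Fin.val_eq_zero_iff, u] at hx ⊢
  split_ifs <;> lia

end Circulant

section BlowUp

variable {ι α β : Type*} {V : ι → Type*}

/-- The graph obtained from `T` by substituting the graph `G p` for each vertex `p`. -/
def blowUp (T : SimpleGraph ι) (G : ∀ p, SimpleGraph (V p)) : SimpleGraph (Σ p, V p) where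
  Adj := Sigma.Lex T.Adj fun p ↦ (G p).Adj
  symm := ⟨by
    rintro _ _ (⟨x, y, h⟩ | ⟨x, y, h⟩)
    exacts [.left _ _ h.symm, .right _ _ h.symm]⟩
  loopless := ⟨fun x h ↦ by
    obtain h | ⟨_, h⟩ := Sigma.lex_iff.mp h
    exacts [h.ne rfl, h.ne rfl]⟩

variable {T : SimpleGraph ι} {G : ∀ p, SimpleGraph (V p)} {A : SimpleGraph α}

@[simp]
theorem blowUp_adj_mk_mk {p : ι} {x y : V p} :
    (blowUp T G).Adj ⟨p, x⟩ ⟨p, y⟩ ↔ (G p).Adj x y := by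
  simp [blowUp, Sigma.lex_iff]

theorem blowUp_adj_of_fst_ne {x y : Σ p, V p} (h : x.1 ≠ y.1) :
    (blowUp T G).Adj x y ↔ T.Adj x.1 y.1 := by
  simp [blowUp, Sigma.lex_iff, h]

theorem blowUp_bot_bot : blowUp (⊥ : SimpleGraph ι) (fun p ↦ (⊥ : SimpleGraph (V p))) = ⊥ := by
  ext
  simp [blowUp, Sigma.lex_iff]

theorem exists_eq_mk_of_fst_eq {p : ι} {z : Σ p, V p} (h : z.1 = p) : ∃ x, z = ⟨p, x⟩ := by
  subst h
  exact ⟨z.2, rfl⟩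

theorem not_blowUp_adj_of_eq_bot {y z : Σ p, V p} (h : y.1 = z.1) (hbot : G z.1 = ⊥) :
    ¬ (blowUp T G).Adj y z := by
  obtain ⟨p, y⟩ := y
  obtain ⟨q, z⟩ := z
  obtain rfl : p = q := h
  simp [show G p = ⊥ from hbot]

theorem eq_of_forall_adj_eq (hA : A.Preconnected) {f : α → β}
    (hf : ∀ a b, A.Adj a b → f a = f b) (a b : α) : f a = f b := by
  obtain ⟨w⟩ := hA a b
  induction w with
  | nil => rfl
  | cons h _ ih => exact (hf _ _ h).trans ih

theorem isContained_of_copy_blowUp (hA : A.Preconnected) (f : Copy A (blowUp T G))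
    (hf : ∀ a b, A.Adj a b → (f a).1 = (f b).1) (a : α) : A ⊑ G (f a).1 := by
  have hpart (b : α) : ∃ x, f b = ⟨(f a).1, x⟩ :=
    exists_eq_mk_of_fst_eq (eq_of_forall_adj_eq hA hf b a)
  choose g hg using hpart
  refine ⟨⟨⟨g, fun {b b'} h ↦ ?_⟩, fun b b' h ↦ f.injective ?_⟩⟩
  · have hadj : (blowUp T G).Adj (f b) (f b') := f.toHom.map_rel h
    rwa [hg b, hg b', blowUp_adj_mk_mk] at hadj
  · exact (hg b).trans ((congrArg _ h).trans (hg b').symm)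

theorem free_blowUp_bot (hA : A.Connected) (hG : ∀ p, A.Free (G p)) :
    A.Free (blowUp ⊥ G) := by
  rintro ⟨f⟩
  obtain ⟨a⟩ := hA.nonempty
  refine hG _ (isContained_of_copy_blowUp hA.preconnected f (fun b b' h ↦ ?_) a)
  by_contra hne
  exact (blowUp_adj_of_fst_ne hne).mp (f.toHom.map_rel h)

theorem fst_eq_of_blowUp_adj (hT : T.CliqueFree 3) {p : ι} {y z : Σ p, V p}
    (hy : T.Adj p y.1) (hz : T.Adj p z.1) (h : (blowUp T G).Adj y z) : y.1 = z.1 := by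
  classical
  by_contra hne
  exact hT _ (is3Clique_triple_iff.mpr ⟨hy, hz, (blowUp_adj_of_fst_ne hne).mp h⟩)

section Neighborhood

variable {m : ℕ} {S : Set ι} {p : ι} {x : V p}

theorem pathGraph_isContained_of_notMem (hT : T.CliqueFree 3) (hbot : ∀ q ∉ S, G q = ⊥)
    (hp : p ∉ S) (f : Copy (pathGraph m) (blowUp T G)) (hx : ∀ s, (blowUp T G).Adj (f s) ⟨p, x⟩)
    (s : Fin m) : pathGraph m ⊑ G (f s).1 := by
  have hTp (s : Fin m) : T.Adj p (f s).1 :=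
    ((blowUp_adj_of_fst_ne fun heq ↦ not_blowUp_adj_of_eq_bot heq (hbot p hp) (hx s)).mp
      (hx s)).symm
  exact isContained_of_copy_blowUp (pathGraph_preconnected m) f
    (fun s t hst ↦ fst_eq_of_blowUp_adj hT (hTp s) (hTp t) (f.toHom.map_rel hst)) s

theorem starG_isContained_of_mem (hT : T.CliqueFree 3) (hS : T.IsIndepSet S)
    (hbot : ∀ q ∉ S, G q = ⊥) (hp : p ∈ S) (f : Copy (pathGraph m) (blowUp T G))
    (hx : ∀ s, (blowUp T G).Adj ⟨p, x⟩ (f s)) : starG (m / 2) ⊑ G p := by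
  have halternate (s t) (hst : (pathGraph m).Adj s t) : (f s).1 = p ∨ (f t).1 = p := by
    by_contra! ⟨hs, ht⟩
    have hTs := (blowUp_adj_of_fst_ne hs.symm).mp (hx s)
    have hTt := (blowUp_adj_of_fst_ne ht.symm).mp (hx t)
    have hadj : (blowUp T G).Adj (f s) (f t) := f.toHom.map_rel hst
    exact not_blowUp_adj_of_eq_bot (fst_eq_of_blowUp_adj hT hTs hTt hadj)
      (hbot _ fun htS ↦ hS hp htS hTt.ne hTt) hadj
  obtain ⟨r, hr, hpr⟩ := exists_injective_of_forall_pathGraph_adj halternate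
  choose g hg using fun i ↦ exists_eq_mk_of_fst_eq (hpr i)
  refine starG_isContained (v := x) (f := g) (fun i j h ↦ hr (f.injective ?_)) fun i ↦ ?_
  · exact (hg i).trans ((congrArg _ h).trans (hg j).symm)
  · simpa [hg] using hx (r i)

end Neighborhood

theorem kipasG_free_blowUp {m : ℕ} (hm : 0 < m) (hT : T.CliqueFree 3) {S : Set ι}
    (hS : T.IsIndepSet S) (hbot : ∀ p ∉ S, G p = ⊥) (hpath : ∀ p, (pathGraph m).Free (G p))
    (hstar : ∀ p ∈ S, (starG (m / 2)).Free (G p)) : (kipasG m).Free (blowUp T G) := by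
  rintro ⟨f⟩
  have hrim (s : Fin m) : (blowUp T G).Adj (f 0) (f.comp (kipasRim m) s) :=
    f.toHom.map_rel (kipasG_adj_zero_succ s)
  obtain hp | hp := em ((f 0).1 ∈ S)
  · exact hstar _ hp (starG_isContained_of_mem hT hS hbot hp (f.comp (kipasRim m)) hrim)
  · exact hpath _ (pathGraph_isContained_of_notMem hT hbot hp (f.comp (kipasRim m))
      (fun s ↦ (hrim s).symm) ⟨0, hm⟩)

end BlowUp

section Colorings

variable {α V W κ : Type*} {k : ℕ}

/-- The graph of the pairs of color `i`, for a coloring `χ` of the edges of a complete graph.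
The diagonal values of `χ` are irrelevant. -/
def colorGraph (χ : V → V → κ) (i : κ) : SimpleGraph V :=
  fromRel fun x y ↦ χ x y = i

theorem colorGraph_adj {χ : V → V → κ} (hχ : ∀ x y, χ x y = χ y x) {i : κ} {x y : V} :
    (colorGraph χ i).Adj x y ↔ x ≠ y ∧ χ x y = i := by
  simp [colorGraph, hχ y x]

theorem colorGraph_eq_bot {χ : V → V → κ} {i : κ} (h : ∀ x y, χ x y ≠ i) :
    colorGraph χ i = ⊥ := by
  ext
  simp [colorGraph, h]

theorem colorGraph_comp_of_injective {κ' : Type*} {σ : κ → κ'} (hσ : σ.Injective)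
    (χ : V → V → κ) (i : κ) : colorGraph (fun x y ↦ σ (χ x y)) (σ i) = colorGraph χ i := by
  ext
  simp [colorGraph, hσ.eq_iff]

theorem colorGraph_comap {e : W → V} (he : e.Injective) (χ : V → V → κ) (i : κ) :
    colorGraph (fun x y ↦ χ (e x) (e y)) i = (colorGraph χ i).comap e := by
  ext
  simp [colorGraph, he.eq_iff]

theorem colorGraph_comap_isContained {e : W → V} (he : e.Injective) (χ : V → V → κ) (i : κ) :
    colorGraph (fun x y ↦ χ (e x) (e y)) i ⊑ colorGraph χ i :=
  colorGraph_comap he χ i ▸ ⟨(Embedding.comap ⟨e, he⟩ _).toCopy⟩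

theorem isMonoCopy_top_iff {χ : V → V → Fin k} (hχ : ∀ x y, χ x y = χ y x) {H : SimpleGraph α} :
    IsMonoCopy ⊤ χ H ↔ ∃ i, H ⊑ colorGraph χ i := by
  constructor
  · rintro ⟨f, i, hf, hmono⟩
    exact ⟨i, ⟨⟨⟨f, fun {a b} h ↦ (colorGraph_adj hχ).mpr (hmono a b h)⟩, hf⟩⟩⟩
  · rintro ⟨i, ⟨f⟩⟩
    exact ⟨f, i, f.injective, fun a b h ↦ (colorGraph_adj hχ).mp (f.toHom.map_rel h)⟩

theorem noRainbowTriangle_top_iff {χ : V → V → Fin k} :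
    NoRainbowTriangle ⊤ χ ↔ ∀ x y z, x ≠ y → y ≠ z → x ≠ z →
      χ x y = χ y z ∨ χ y z = χ x z ∨ χ x y = χ x z := by
  simp only [NoRainbowTriangle, top_adj]
  grind

theorem noRainbowTriangle_top_comap {χ : V → V → Fin k} (h : NoRainbowTriangle ⊤ χ) {e : W → V}
    (he : e.Injective) : NoRainbowTriangle ⊤ fun x y ↦ χ (e x) (e y) :=
  noRainbowTriangle_top_iff.mpr fun _ _ _ hxy hyz hxz ↦
    noRainbowTriangle_top_iff.mp h _ _ _ (he.ne hxy) (he.ne hyz) (he.ne hxz)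

theorem noRainbowTriangle_top_of_two_colors {χ : V → V → Fin k} {a b : Fin k}
    (h : ∀ x y, χ x y = a ∨ χ x y = b) : NoRainbowTriangle ⊤ χ :=
  noRainbowTriangle_top_iff.mpr fun x y z _ _ _ ↦ by grind

open Classical in
/-- The coloring with color `a` on the edges of `G` and color `b` on its non-edges. -/
noncomputable def graphColoring (G : SimpleGraph V) (a b : κ) (x y : V) : κ :=
  if G.Adj x y then a else b

section GraphColoring

variable (G : SimpleGraph V) {a b : κ}

theorem graphColoring_comm (a b : κ) (x y : V) :
    graphColoring G a b x y = graphColoring G a b y x := by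
  classical exact if_congr (G.adj_comm x y) rfl rfl

theorem graphColoring_eq_or (a b : κ) (x y : V) :
    graphColoring G a b x y = a ∨ graphColoring G a b x y = b := by
  by_cases h : G.Adj x y <;> simp [graphColoring, h]

theorem colorGraph_graphColoring_left (hab : a ≠ b) : colorGraph (graphColoring G a b) a = G := by
  ext x y
  simp only [colorGraph_adj (graphColoring_comm G a b), graphColoring, ite_eq_left_iff]
  exact ⟨fun h ↦ by_contra fun h' ↦ hab (h.2 h').symm, fun h ↦ ⟨h.ne, fun h' ↦ (h' h).elim⟩⟩

theorem colorGraph_graphColoring_right (hab : a ≠ b) :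
    colorGraph (graphColoring G a b) b = Gᶜ := by
  ext x y
  simp [colorGraph_adj (graphColoring_comm G a b), graphColoring, hab]

theorem colorGraph_graphColoring_of_ne {i : κ} (ha : i ≠ a) (hb : i ≠ b) :
    colorGraph (graphColoring G a b) i = ⊥ :=
  colorGraph_eq_bot fun x y h ↦ (graphColoring_eq_or G a b x y).elim
    (fun h' ↦ ha (h.symm.trans h')) fun h' ↦ hb (h.symm.trans h')

end GraphColoring

end Colorings

section BlowUpColoring

variable {ι κ : Type*} {V : ι → Type*} {k : ℕ}

open Classical in
/-- The coloring that uses `χ p` inside the part `V p` and `τ` between different parts. -/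
noncomputable def blowUpColoring (τ : ι → ι → κ) (χ : ∀ p, V p → V p → κ) (x y : Σ p, V p) : κ :=
  if h : x.1 = y.1 then χ y.1 (h ▸ x.2) y.2 else τ x.1 y.1

theorem blowUpColoring_mk_mk (τ : ι → ι → κ) (χ : ∀ p, V p → V p → κ) (p : ι) (x y : V p) :
    blowUpColoring τ χ ⟨p, x⟩ ⟨p, y⟩ = χ p x y := by
  simp [blowUpColoring]

theorem blowUpColoring_of_fst_ne (τ : ι → ι → κ) (χ : ∀ p, V p → V p → κ) {x y : Σ p, V p}
    (h : x.1 ≠ y.1) : blowUpColoring τ χ x y = τ x.1 y.1 := by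
  simp [blowUpColoring, h]

section Symmetric

variable {τ : ι → ι → κ} (hτ : ∀ p q, τ p q = τ q p) {χ : ∀ p, V p → V p → κ}
  (hχ : ∀ p x y, χ p x y = χ p y x)
include hτ hχ

theorem blowUpColoring_comm (x y : Σ p, V p) :
    blowUpColoring τ χ x y = blowUpColoring τ χ y x := by
  obtain ⟨p, x⟩ := x
  obtain ⟨q, y⟩ := y
  obtain rfl | hpq := eq_or_ne p q
  · rw [blowUpColoring_mk_mk, blowUpColoring_mk_mk, hχ]
  · rw [blowUpColoring_of_fst_ne _ _ hpq, blowUpColoring_of_fst_ne _ _ hpq.symm, hτ]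

theorem colorGraph_blowUpColoring (i : κ) : colorGraph (blowUpColoring τ χ) i =
    blowUp (colorGraph τ i) fun p ↦ colorGraph (χ p) i := by
  ext ⟨p, x⟩ ⟨q, y⟩
  rw [colorGraph_adj (blowUpColoring_comm hτ hχ)]
  obtain rfl | hpq := eq_or_ne p q
  · simp [blowUpColoring_mk_mk, colorGraph_adj (hχ p)]
  · simp [blowUpColoring_of_fst_ne, blowUp_adj_of_fst_ne, colorGraph_adj hτ, hpq]

end Symmetric

theorem noRainbowTriangle_blowUpColoring {τ : ι → ι → Fin k} (hτ : ∀ p q, τ p q = τ q p)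
    {χ : ∀ p, V p → V p → Fin k} (hτrainbow : NoRainbowTriangle ⊤ τ)
    (hrainbow : ∀ p, NoRainbowTriangle ⊤ (χ p)) : NoRainbowTriangle ⊤ (blowUpColoring τ χ) := by
  refine noRainbowTriangle_top_iff.mpr fun x y z hxy hyz hxz ↦ ?_
  have hcross {u v : Σ p, V p} := blowUpColoring_of_fst_ne τ χ (x := u) (y := v)
  by_cases hpart : x.1 = y.1 ∧ y.1 = z.1
  · obtain ⟨⟨p, x⟩, ⟨q, y⟩, ⟨r, z⟩⟩ := x, y, z
    obtain ⟨rfl, rfl⟩ : p = q ∧ q = r := hpart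
    simp only [blowUpColoring_mk_mk]
    exact noRainbowTriangle_top_iff.mp (hrainbow p) x y z (by grind) (by grind) (by grind)
  · have hτ' := noRainbowTriangle_top_iff.mp hτrainbow x.1 y.1 z.1
    by_cases x.1 = y.1 <;> by_cases y.1 = z.1 <;> by_cases x.1 = z.1 <;> grind

end BlowUpColoring

section KipasColorings

variable {V W : Type*} {m k : ℕ}

/-- A graph with neither a star `K_{1,⌊m/2⌋}` nor a path `P_m`: a color class with this property
inside the parts of a blow-up may be reused between the parts. -/
structure KipasSparse (m : ℕ) (G : SimpleGraph V) : Prop where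
  starG_free : (starG (m / 2)).Free G
  pathGraph_free : (pathGraph m).Free G

theorem KipasSparse.of_isContained {G : SimpleGraph V} {H : SimpleGraph W} (hH : KipasSparse m H)
    (h : G ⊑ H) : KipasSparse m G :=
  ⟨fun hG ↦ hH.starG_free (hG.trans h), fun hG ↦ hH.pathGraph_free (hG.trans h)⟩

theorem KipasSparse.kipasG_free {G : SimpleGraph V} (hG : KipasSparse m G) : (kipasG m).Free G :=
  fun h ↦ hG.pathGraph_free (IsContained.trans ⟨kipasRim m⟩ h)

theorem kipasSparse_bot (hm : 2 ≤ m) : KipasSparse m (⊥ : SimpleGraph V) :=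
  ⟨free_bot (starG_ne_bot (by lia)), free_bot (pathGraph_ne_bot hm)⟩

theorem kipasSparse_of_degree_lt [Fintype V] {G : SimpleGraph V} [DecidableRel G.Adj]
    (hV : Fintype.card V < m) (hdeg : ∀ v, G.degree v < m / 2) : KipasSparse m G :=
  ⟨starG_free_of_degree_lt hdeg, free_of_card_lt (by simpa)⟩

theorem KipasSparse.blowUp_bot {ι : Type*} {V : ι → Type*} {G : ∀ p, SimpleGraph (V p)}
    (hm : 0 < m) (hG : ∀ p, KipasSparse m (G p)) : KipasSparse m (blowUp ⊥ G) :=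
  ⟨free_blowUp_bot (starG_connected _) fun p ↦ (hG p).starG_free,
    free_blowUp_bot ((connected_iff _).mpr ⟨pathGraph_preconnected m, ⟨⟨0, hm⟩⟩⟩)
      fun p ↦ (hG p).pathGraph_free⟩

/-- A Gallai coloring that uses only colors from `F` and `S`, in which the color classes from `F`
contain no kipas `K̂_m` and those from `S` are sparse. The colors in `S` can be used once more
between the parts of a later blow-up, whereas those in `F` are exhausted. -/
structure IsKipasColoring (m : ℕ) (χ : V → V → Fin k) (F S : Finset (Fin k)) : Prop where
  comm : ∀ x y, χ x y = χ y x
  noRainbow : NoRainbowTriangle ⊤ χ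
  kipasG_free : ∀ i ∈ F, (kipasG m).Free (colorGraph χ i)
  sparse : ∀ i ∈ S, KipasSparse m (colorGraph χ i)
  eq_bot : ∀ i ∉ F, i ∉ S → colorGraph χ i = ⊥

namespace IsKipasColoring

variable {χ : V → V → Fin k} {F S S' : Finset (Fin k)}

theorem sparse_of_notMem (h : IsKipasColoring m χ F S) (hm : 2 ≤ m) {i : Fin k} (hi : i ∉ F) :
    KipasSparse m (colorGraph χ i) :=
  if hS : i ∈ S then h.sparse i hS else h.eq_bot i hi hS ▸ kipasSparse_bot hm

theorem not_isMonoCopy (h : IsKipasColoring m χ F S) (hm : 2 ≤ m) :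
    ¬ IsMonoCopy ⊤ χ (kipasG m) := by
  rw [isMonoCopy_top_iff h.comm]
  rintro ⟨i, hi⟩
  by_cases hF : i ∈ F
  · exact h.kipasG_free i hF hi
  · exact (h.sparse_of_notMem hm hF).kipasG_free hi

theorem comap (h : IsKipasColoring m χ F S) {e : W → V} (he : e.Injective) :
    IsKipasColoring m (fun x y ↦ χ (e x) (e y)) F S where
  comm _ _ := h.comm _ _
  noRainbow := noRainbowTriangle_top_comap h.noRainbow he
  kipasG_free i hi hK := h.kipasG_free i hi (hK.trans (colorGraph_comap_isContained he χ i))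
  sparse i hi := (h.sparse i hi).of_isContained (colorGraph_comap_isContained he χ i)
  eq_bot i hF hS := by rw [colorGraph_comap he, h.eq_bot i hF hS, comap_bot]

theorem mono_right (h : IsKipasColoring m χ F S) (hm : 2 ≤ m) (hS : S ⊆ S')
    (hdisj : Disjoint F S') : IsKipasColoring m χ F S' where
  comm := h.comm
  noRainbow := h.noRainbow
  kipasG_free := h.kipasG_free
  sparse _ hi := h.sparse_of_notMem hm (Finset.disjoint_right.mp hdisj hi)
  eq_bot i hF hi := h.eq_bot i hF fun hi' ↦ hi (hS hi')

end IsKipasColoring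

section Substitution

variable {ι : Type*} {V : ι → Type*} {T : SimpleGraph ι} {a b : Fin k} {F S : Finset (Fin k)}
  {χ : ∀ p, V p → V p → Fin k} {P : ι → Finset (Fin k)}

theorem isKipasColoring_blowUpColoring (hm : 2 ≤ m) (hT : T.CliqueFree 3) (hTc : Tᶜ.CliqueFree 3)
    (hab : a ≠ b) (ha : a ∉ F ∪ S) (hb : b ∉ F ∪ S) (hχ : ∀ p, IsKipasColoring m (χ p) F (P p))
    (hPa : T.IsIndepSet {p | a ∈ P p}) (hPb : Tᶜ.IsIndepSet {p | b ∈ P p})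
    (hSP : ∀ p, S ⊆ P p) (hPS : ∀ p, P p ⊆ insert a (insert b S)) :
    IsKipasColoring m (blowUpColoring (graphColoring T a b) χ) (insert a (insert b F)) S := by
  simp only [Finset.mem_union, not_or] at ha hb
  have hclass := colorGraph_blowUpColoring (graphColoring_comm T a b) fun p ↦ (hχ p).comm
  have hclass_of_ne {i : Fin k} (hia : i ≠ a) (hib : i ≠ b) :
      colorGraph (blowUpColoring (graphColoring T a b) χ) i =
        blowUp ⊥ fun p ↦ colorGraph (χ p) i := by
    rw [hclass, colorGraph_graphColoring_of_ne T hia hib]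
  have hnew {i : Fin k} (hi : i ∉ F) {T' : SimpleGraph ι} (hT' : T'.CliqueFree 3)
      (hind : T'.IsIndepSet {p | i ∈ P p}) :
      (kipasG m).Free (blowUp T' fun p ↦ colorGraph (χ p) i) :=
    kipasG_free_blowUp (by lia) hT' hind (fun p ↦ (hχ p).eq_bot i hi)
      (fun p ↦ ((hχ p).sparse_of_notMem hm hi).pathGraph_free)
      fun p hp ↦ ((hχ p).sparse i hp).starG_free
  refine ⟨blowUpColoring_comm (graphColoring_comm T a b) fun p ↦ (hχ p).comm,
    noRainbowTriangle_blowUpColoring (graphColoring_comm T a b)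
      (noRainbowTriangle_top_of_two_colors (graphColoring_eq_or T a b)) fun p ↦ (hχ p).noRainbow,
    fun i hi ↦ ?_, fun i hi ↦ ?_, fun i hF hS ↦ ?_⟩
  · obtain rfl | hia := eq_or_ne i a
    · rw [hclass, colorGraph_graphColoring_left T hab]
      exact hnew ha.1 hT hPa
    obtain rfl | hib := eq_or_ne i b
    · rw [hclass, colorGraph_graphColoring_right T hab]
      exact hnew hb.1 hTc hPb
    rw [hclass_of_ne hia hib]
    exact free_blowUp_bot (kipasG_connected m) fun p ↦ (hχ p).kipasG_free i (by simp_all)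
  · rw [hclass_of_ne (by grind) (by grind)]
    exact .blowUp_bot (by lia) fun p ↦ (hχ p).sparse i (hSP p hi)
  · simp only [Finset.mem_insert, not_or] at hF
    rw [hclass_of_ne hF.1 hF.2.1, ← blowUp_bot_bot]
    congr with p : 1
    exact (hχ p).eq_bot i hF.2.2 fun hi ↦ by grind

end Substitution

end KipasColorings

section Sizes

variable {m k : ℕ} {F S S' : Finset (Fin k)} {a b : Fin k} {N c d j n : ℕ}

/-- The complete graph on `N` vertices has an `IsKipasColoring` for `F` and `S`. -/
def HasKipasColoring (m : ℕ) (F S : Finset (Fin k)) (N : ℕ) : Prop :=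
  ∃ χ : Fin N → Fin N → Fin k, IsKipasColoring m χ F S

theorem IsKipasColoring.hasKipasColoring {V : Type*} [Fintype V] {χ : V → V → Fin k}
    (h : IsKipasColoring m χ F S) (hN : N ≤ Fintype.card V) : HasKipasColoring m F S N :=
  have ⟨e⟩ : Nonempty (Fin N ↪ V) := Function.Embedding.nonempty_of_card_le (by simpa)
  ⟨_, h.comap e.injective⟩

theorem HasKipasColoring.anti {N' : ℕ} (h : HasKipasColoring m F S N) (hN : N' ≤ N) :
    HasKipasColoring m F S N' :=
  have ⟨_, hχ⟩ := h
  hχ.hasKipasColoring (by simpa)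

theorem HasKipasColoring.mono_right (h : HasKipasColoring m F S N) (hm : 2 ≤ m) (hS : S ⊆ S')
    (hdisj : Disjoint F S') : HasKipasColoring m F S' N :=
  h.imp fun _ hχ ↦ hχ.mono_right hm hS hdisj

theorem cliqueFree_cycleGraph_five : (cycleGraph 5).CliqueFree 3 := by
  simp only [CliqueFree, is3Clique_iff]
  rintro _ ⟨p, q, r, hpq, hpr, hqr, -⟩
  revert p q r
  decide

theorem cliqueFree_compl_cycleGraph_five : (cycleGraph 5)ᶜ.CliqueFree 3 := by
  simp only [CliqueFree, is3Clique_iff]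
  rintro _ ⟨p, q, r, hpq, hpr, hqr, -⟩
  revert p q r
  decide

theorem hasKipasColoring_pentagon {N₀ N₁ N₂ : ℕ} (hm : 2 ≤ m) (hab : a ≠ b) (ha : a ∉ F ∪ S)
    (hb : b ∉ F ∪ S) (h₀ : HasKipasColoring m F S N₀) (h₁ : HasKipasColoring m F (insert a S) N₁)
    (h₂ : HasKipasColoring m F (insert b S) N₂) :
    HasKipasColoring m (insert a (insert b F)) S (N₀ + 2 * N₁ + 2 * N₂) := by
  let P : Fin 5 → Finset (Fin k) := ![S, insert a S, insert b S, insert b S, insert a S]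
  have hparts (p : Fin 5) : HasKipasColoring m F (P p) (![N₀, N₁, N₂, N₂, N₁] p) := by
    fin_cases p <;> assumption
  choose χ hχ using hparts
  have haS : a ∉ S := fun h ↦ ha (Finset.mem_union_right F h)
  have hbS : b ∉ S := fun h ↦ hb (Finset.mem_union_right F h)
  have haP (p) : a ∈ P p ↔ p = 1 ∨ p = 4 := by fin_cases p <;> simp [P, haS, hab]
  have hbP (p) : b ∈ P p ↔ p = 2 ∨ p = 3 := by fin_cases p <;> simp [P, hbS, hab.symm]
  refine (isKipasColoring_blowUpColoring hm cliqueFree_cycleGraph_five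
    cliqueFree_compl_cycleGraph_five hab ha hb hχ ?_ ?_ (fun p ↦ ?_) fun p ↦ ?_).hasKipasColoring ?_
  · simp only [haP]
    rintro p (rfl | rfl) q (rfl | rfl) <;> decide
  · simp only [hbP]
    rintro p (rfl | rfl) q (rfl | rfl) <;> decide
  · fin_cases p <;> simp [P]
  · have hS : S ⊆ insert a (insert b S) :=
      (Finset.subset_insert b S).trans (Finset.subset_insert a _)
    fin_cases p <;> simp [P, hS]
  · simp only [Fintype.card_sigma, Fintype.card_fin, Fin.sum_univ_five, Matrix.cons_val]
    lia

theorem hasKipasColoring_half (hm : 2 ≤ m) (a : Fin k) :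
    HasKipasColoring m ∅ {a} (m / 2) := by
  refine ⟨fun _ _ ↦ a, fun _ _ ↦ rfl,
    noRainbowTriangle_top_of_two_colors (b := a) fun _ _ ↦ .inl rfl, by simp, fun i _ ↦ ?_,
    fun i _ hi ↦ colorGraph_eq_bot fun _ _ h ↦ hi (by simp [h])⟩
  exact ⟨free_of_card_lt (by simp),
    free_of_card_lt (by rw [Fintype.card_fin, Fintype.card_fin]; lia)⟩

theorem hasKipasColoring_block {t : ℕ} (hc : 2 * t < c) (hcm : c < m) (ht : 2 * t < m / 2)
    (htc : c ≤ 2 * t + m / 2) (hab : a ≠ b) : HasKipasColoring m ∅ {a, b} c := by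
  obtain ⟨G, _, hG⟩ := exists_isRegularOfDegree_two_mul hc
  have hGc := hG.compl
  have hcard : Fintype.card (Fin c) < m := by simpa
  refine ⟨graphColoring G a b, graphColoring_comm G a b,
    noRainbowTriangle_top_of_two_colors (graphColoring_eq_or G a b), by simp, fun i hi ↦ ?_,
    fun i _ hi ↦ ?_⟩
  · obtain rfl | rfl := by simpa using hi
    · rw [colorGraph_graphColoring_left G hab]
      exact kipasSparse_of_degree_lt hcard fun v ↦ by rw [hG.degree_eq]; lia
    · rw [colorGraph_graphColoring_right G hab]
      exact kipasSparse_of_degree_lt hcard fun v ↦ by rw [hGc.degree_eq, Fintype.card_fin]; lia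
  · simp only [Finset.mem_insert, Finset.mem_singleton, not_or] at hi
    exact colorGraph_graphColoring_of_ne G hi.1 hi.2

theorem hasKipasColoring_of_not_isMonoCopy {χ : Fin n → Fin n → Fin 2}
    (hχ : ∀ x y, χ x y = χ y x) (hK : ¬ IsMonoCopy ⊤ χ (kipasG m)) (hF : F.card = 2) :
    HasKipasColoring m F ∅ n := by
  let σ := F.orderEmbOfFin hF
  have hσ (i) : i ∈ F ↔ ∃ j, σ j = i := by
    rw [← Finset.mem_coe, ← F.range_orderEmbOfFin hF, Set.mem_range]
  refine ⟨fun x y ↦ σ (χ x y), fun x y ↦ by rw [hχ],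
    noRainbowTriangle_top_of_two_colors (a := σ 0) (b := σ 1) fun x y ↦ ?_, fun i hi hcopy ↦ ?_,
    by simp, fun i hi _ ↦ colorGraph_eq_bot fun x y h ↦ hi ((hσ i).mpr ⟨_, h⟩)⟩
  · obtain h | h := Fin.exists_fin_two.mp ⟨χ x y, rfl⟩ <;> simp [h]
  · obtain ⟨j, rfl⟩ := (hσ i).mp hi
    rw [colorGraph_comp_of_injective σ.injective] at hcopy
    exact hK ((isMonoCopy_top_iff hχ).mpr ⟨j, hcopy⟩)

theorem exists_insert_insert_of_card_eq_add_two {α : Type*} [DecidableEq α] {F : Finset α} {n : ℕ}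
    (hF : F.card = n + 2) :
    ∃ p q F', p ≠ q ∧ p ∉ F' ∧ q ∉ F' ∧ insert p (insert q F') = F ∧ F'.card = n := by
  obtain ⟨p, F₁, hp, rfl, hF₁⟩ := Finset.card_eq_succ.mp hF
  obtain ⟨q, F', hq, rfl, hF'⟩ := Finset.card_eq_succ.mp hF₁
  rw [Finset.mem_insert, not_or] at hp
  exact ⟨p, q, F', hp.1, hp.2, hq, rfl, hF'⟩

section Iteration

variable (hm : 2 ≤ m) (hblock : ∀ {a b : Fin k}, a ≠ b → HasKipasColoring m ∅ {a, b} c)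
include hm hblock

theorem hasKipasColoring_five_pow_mul (hF : F.card = 2 * j) (hab : a ≠ b) (ha : a ∉ F)
    (hb : b ∉ F) : HasKipasColoring m F {a, b} (5 ^ j * c) := by
  induction j generalizing F with
  | zero =>
    obtain rfl : F = ∅ := by simpa using hF
    simpa using hblock hab
  | succ j ih =>
    obtain ⟨p, q, F', hpq, hp, hq, rfl, hF'⟩ := exists_insert_insert_of_card_eq_add_two hF
    simp only [Finset.mem_insert, not_or] at ha hb
    have hF'ab := ih hF' ha.2.2 hb.2.2
    have hpart {r : Fin k} (hr : r ∉ F') : HasKipasColoring m F' (insert r {a, b}) (5 ^ j * c) :=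
      hF'ab.mono_right hm (Finset.subset_insert r _) (by simp [hr, ha.2.2, hb.2.2])
    refine (hasKipasColoring_pentagon hm hpq ?_ ?_ hF'ab (hpart hp) (hpart hq)).anti ?_
    · grind
    · grind
    · rw [pow_succ]; lia

theorem hasKipasColoring_half_add (hF : F.card = 2 * j) (ha : a ∉ F) :
    HasKipasColoring m F {a} (m / 2 + (5 ^ j - 1) * c) := by
  induction j generalizing F with
  | zero =>
    obtain rfl : F = ∅ := by simpa using hF
    simpa using hasKipasColoring_half hm a
  | succ j ih =>
    obtain ⟨p, q, F', hpq, hp, hq, rfl, hF'⟩ := exists_insert_insert_of_card_eq_add_two hF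
    simp only [Finset.mem_insert, not_or] at ha
    refine (hasKipasColoring_pentagon hm hpq ?_ ?_ (ih hF' ha.2.2)
      (hasKipasColoring_five_pow_mul hm hblock hF' (Ne.symm ha.1) hp ha.2.2)
      (hasKipasColoring_five_pow_mul hm hblock hF' (Ne.symm ha.2.1) hq ha.2.2)).anti ?_
    · grind
    · grind
    · simp only [pow_succ, Nat.sub_one_mul]; lia

theorem hasKipasColoring_add_sub (hd : d + 2 * (m / 2) = 2 * c)
    (hn : ∀ {a b : Fin k}, a ≠ b → HasKipasColoring m {a, b} ∅ n) (hF : F.card = 2 * j + 2) :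
    HasKipasColoring m F ∅ (n + 5 * c * (5 ^ j - 1) - d * (2 * j)) := by
  induction j generalizing F with
  | zero =>
    obtain ⟨a, b, hab, rfl⟩ := Finset.card_eq_two.mp hF
    simpa using hn hab
  | succ j ih =>
    obtain ⟨p, q, F', hpq, hp, hq, rfl, hF'⟩ := exists_insert_insert_of_card_eq_add_two hF
    have hpart {r : Fin k} (hr : r ∉ F') := hasKipasColoring_half_add hm hblock (j := j + 1) hF' hr
    refine (hasKipasColoring_pentagon hm hpq (by simpa) (by simpa) (ih hF') (hpart hp)
      (hpart hq)).anti ?_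
    have hc : c ≤ 5 ^ j * c := Nat.le_mul_of_pos_left c (by positivity)
    simp only [pow_succ, Nat.sub_one_mul, Nat.mul_sub_one, mul_add]
    lia

end Iteration

end Sizes

section RamseyNumbers

variable {α V W : Type*} {k n : ℕ} {χ : V → V → Fin k} {H : SimpleGraph α}

theorem isMonoCopy_top_of_comap {e : W → V} (he : e.Injective)
    (h : IsMonoCopy ⊤ (fun x y ↦ χ (e x) (e y)) H) : IsMonoCopy ⊤ χ H :=
  have ⟨f, i, hf, hmono⟩ := h
  ⟨e ∘ f, i, he.comp hf, fun a b hab ↦ ⟨he.ne (hmono a b hab).1, (hmono a b hab).2⟩⟩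

theorem exists_forall_lt_color_eq (χ : V → V → Fin k) (n : ℕ) {S : Finset V}
    (hS : (k + 1) ^ n ≤ S.card) : ∃ (v : Fin n → V) (κ : Fin n → Fin k),
      (∀ s, v s ∈ S) ∧ ∀ s t, s < t → v s ≠ v t ∧ χ (v s) (v t) = κ s := by
  classical
  induction n generalizing S with
  | zero => exact ⟨Fin.elim0, Fin.elim0, fun s ↦ s.elim0, fun s ↦ s.elim0⟩
  | succ n ih =>
    have hpow : 0 < (k + 1) ^ n := by positivity
    obtain ⟨x, hx⟩ := Finset.card_pos.mp (hS.trans_lt' (by positivity))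
    have hcard : (Finset.univ : Finset (Fin k)).card * (k + 1) ^ n ≤ (S.erase x).card := by
      rw [Finset.card_erase_of_mem hx, Finset.card_fin]
      rw [pow_succ] at hS
      lia
    obtain ⟨i, -, hi⟩ := Finset.exists_le_card_fiber_of_mul_le_card_of_maps_to
      (f := χ x) (fun _ _ ↦ Finset.mem_univ _) ⟨χ x x, Finset.mem_univ _⟩ hcard
    obtain ⟨v, κ, hv, hχ⟩ := ih hi
    simp only [Finset.mem_filter, Finset.mem_erase] at hv
    refine ⟨Fin.cons x v, Fin.cons i κ, Fin.forall_fin_succ.mpr ⟨hx, fun s ↦ (hv s).1.2⟩, ?_⟩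
    simp only [Fin.forall_fin_succ, Fin.cons_zero, Fin.cons_succ, Fin.succ_lt_succ_iff]
    exact ⟨⟨by simp, fun t _ ↦ ⟨(hv t).1.1.symm, (hv t).2⟩⟩, fun s ↦ ⟨by simp, hχ s⟩⟩

/- Without this form of Ramsey's theorem, the infima defining `Ramsey2` and `GallaiRamsey` could be
the junk value `sInf ∅ = 0`. -/
theorem isMonoCopy_top_of_pow_le_card [Fintype α] [Fintype V] (hχ : ∀ x y, χ x y = χ y x)
    (hV : (k + 1) ^ (k * Fintype.card α) ≤ Fintype.card V) : IsMonoCopy ⊤ χ H := by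
  obtain ⟨v, κ, -, hvκ⟩ := exists_forall_lt_color_eq χ _ (S := Finset.univ) hV
  have ⟨x⟩ : Nonempty V := Fintype.card_pos_iff.mp (hV.trans_lt' (by positivity))
  obtain ⟨i, -, hi⟩ := Finset.exists_le_card_fiber_of_mul_le_card_of_maps_to (s := Finset.univ)
    (t := Finset.univ) (f := κ) (n := Fintype.card α) (fun _ _ ↦ Finset.mem_univ _)
    ⟨χ x x, Finset.mem_univ _⟩ (by simp)
  have ⟨e⟩ : Nonempty (α ↪ {s // κ s = i}) :=
    Function.Embedding.nonempty_of_card_le (by simpa [Fintype.card_subtype] using hi)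
  have hmono {a b : α} (h : (e a).1 < (e b).1) :
      v (e a) ≠ v (e b) ∧ χ (v (e a)) (v (e b)) = i :=
    (hvκ _ _ h).imp_right (·.trans (e a).2)
  have hne {a b : α} (hab : a ≠ b) : v (e a) ≠ v (e b) ∧ χ (v (e a)) (v (e b)) = i := by
    obtain h | h := lt_or_gt_of_ne (Subtype.val_injective.ne (e.injective.ne hab))
    · exact hmono h
    · exact ⟨(hmono h).1.symm, (hχ _ _).trans (hmono h).2⟩
  exact ⟨fun a ↦ v (e a), i, fun a b h ↦ by_contra fun hab ↦ (hne hab).1 h,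
    fun a b h ↦ hne h.ne⟩

theorem exists_not_isMonoCopy_of_lt_ramsey2 (hn : n < Ramsey2 H) :
    ∃ χ : Fin n → Fin n → Fin 2, (∀ x y, χ x y = χ y x) ∧ ¬ IsMonoCopy ⊤ χ H := by
  simpa using Nat.notMem_of_lt_sInf hn

theorem ramsey2_pos [Finite α] [Nonempty α] : 0 < Ramsey2 H := by
  have := Fintype.ofFinite α
  have hmem : Ramsey2 H ∈ {N | ∀ c : Fin N → Fin N → Fin 2, (∀ x y, c x y = c y x) →
    IsMonoCopy ⊤ c H} :=
    Nat.sInf_mem ⟨_, fun c hc ↦ isMonoCopy_top_of_pow_le_card hc (Fintype.card_fin _).ge⟩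
  have ⟨f, _⟩ := hmem (fun _ _ ↦ 0) fun _ _ ↦ rfl
  exact (f (Classical.arbitrary α)).pos

theorem lt_gallaiRamsey [Finite α] {N : ℕ} {χ : Fin N → Fin N → Fin k}
    (hχ : ∀ x y, χ x y = χ y x) (hrainbow : NoRainbowTriangle ⊤ χ) (hH : ¬ IsMonoCopy ⊤ χ H) :
    N < GallaiRamsey k H := by
  have := Fintype.ofFinite α
  by_contra! hN
  have hGR : GallaiRamsey k H ∈ {N | ∀ c : Fin N → Fin N → Fin k, (∀ x y, c x y = c y x) →
    NoRainbowTriangle ⊤ c → IsMonoCopy ⊤ c H} :=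
    Nat.sInf_mem ⟨_, fun c hc _ ↦ isMonoCopy_top_of_pow_le_card hc (Fintype.card_fin _).ge⟩
  have he := Fin.castLE_injective hN
  exact hH (isMonoCopy_top_of_comap he
    (hGR _ (fun _ _ ↦ hχ _ _) (noRainbowTriangle_top_comap hrainbow he)))

end RamseyNumbers

section LowerBound

variable {k m n c d : ℕ}

theorem hasKipasColoring_univ (hk : 2 ≤ k) (hke : k % 2 = 0) (hm : 2 ≤ m)
    (hcd : (m / 2 % 2 = 0 ∧ c = 2 * (m / 2) - 2 ∧ d = 2 * (m / 2) - 4) ∨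
      (m / 2 % 2 = 1 ∧ c = 2 * (m / 2) - 1 ∧ d = 2 * (m / 2) - 2))
    (h2 : ∃ χ : Fin n → Fin n → Fin 2, (∀ x y, χ x y = χ y x) ∧ ¬ IsMonoCopy ⊤ χ (kipasG m)) :
    HasKipasColoring m (Finset.univ : Finset (Fin k)) ∅
      (n + 5 * c * (5 ^ ((k - 2) / 2) - 1) - d * (k - 2)) := by
  obtain ⟨χ, hχ, hK⟩ := h2
  have hj : 2 * ((k - 2) / 2) = k - 2 := by lia
  have hblock {a b : Fin k} (hab : a ≠ b) : HasKipasColoring m ∅ {a, b} c :=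
    hasKipasColoring_block (t := (m / 2 - 1) / 2) (by lia) (by lia) (by lia) (by lia) hab
  have hn {a b : Fin k} (hab : a ≠ b) : HasKipasColoring m {a, b} ∅ n :=
    hasKipasColoring_of_not_isMonoCopy hχ hK (Finset.card_pair hab)
  have hF : (Finset.univ : Finset (Fin k)).card = 2 * ((k - 2) / 2) + 2 := by
    rw [Finset.card_fin]; lia
  simpa only [hj] using hasKipasColoring_add_sub hm hblock (by lia) hn hF

theorem kipas_gallai_lower_even_k_odd_m_general (hk : 2 ≤ k) (hke : k % 2 = 0) (hm : 2 ≤ m)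
    (hcd : (m / 2 % 2 = 0 ∧ c = 2 * (m / 2) - 2 ∧ d = 2 * (m / 2) - 4) ∨
      (m / 2 % 2 = 1 ∧ c = 2 * (m / 2) - 1 ∧ d = 2 * (m / 2) - 2))
    (h2 : ∃ χ : Fin n → Fin n → Fin 2, (∀ x y, χ x y = χ y x) ∧ ¬ IsMonoCopy ⊤ χ (kipasG m)) :
    (∃ χ : Fin (n + 5 * c * (5 ^ ((k - 2) / 2) - 1) - d * (k - 2)) →
        Fin (n + 5 * c * (5 ^ ((k - 2) / 2) - 1) - d * (k - 2)) → Fin k,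
      (∀ x y, χ x y = χ y x) ∧ NoRainbowTriangle ⊤ χ ∧ ¬ IsMonoCopy ⊤ χ (kipasG m)) ∧
    Ramsey2 (kipasG m) + 5 * c * (5 ^ ((k - 2) / 2) - 1) - d * (k - 2) ≤
      GallaiRamsey k (kipasG m) := by
  refine ⟨?_, ?_⟩
  · obtain ⟨χ, hχ⟩ := hasKipasColoring_univ hk hke hm hcd h2
    exact ⟨χ, hχ.comm, hχ.noRainbow, hχ.not_isMonoCopy hm⟩
  · have hR : 0 < Ramsey2 (kipasG m) := ramsey2_pos
    obtain ⟨χ, hχ⟩ := hasKipasColoring_univ hk hke hm hcd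
      (exists_not_isMonoCopy_of_lt_ramsey2 (Nat.sub_one_lt_of_lt hR))
    have hlt := lt_gallaiRamsey hχ.comm hχ.noRainbow (hχ.not_isMonoCopy hm)
    lia

end LowerBound

/-- Even `k ≥ 2`, odd `m ≥ 7`: from a 2-coloring of `K_n` with no monochromatic
kipas `K̂_m`, one gets a Gallai `k`-coloring of a larger complete graph with no
monochromatic `K̂_m`; consequently the Gallai–Ramsey lower bound. -/
theorem kipas_gallai_lower_even_k_odd_m (k m n c d : ℕ) (hk : 2 ≤ k) (hke : k % 2 = 0)
    (hm : 7 ≤ m) (hmo : m % 2 = 1)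
    (hcd : (m % 4 = 1 ∧ c = m - 3 ∧ d = m - 5) ∨ (m % 4 = 3 ∧ c = m - 2 ∧ d = m - 3))
    (h2 : ∃ χ : Fin n → Fin n → Fin 2, (∀ x y, χ x y = χ y x) ∧
      ¬ IsMonoCopy (⊤ : SimpleGraph (Fin n)) χ (kipasG m)) :
    (∃ χ : Fin (n + 5 * c * (5 ^ ((k - 2) / 2) - 1) - d * (k - 2)) →
        Fin (n + 5 * c * (5 ^ ((k - 2) / 2) - 1) - d * (k - 2)) → Fin k,
      (∀ x y, χ x y = χ y x) ∧
      NoRainbowTriangle (⊤ : SimpleGraph (Fin (n + 5 * c * (5 ^ ((k - 2) / 2) - 1) - d * (k - 2)))) χ ∧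
      ¬ IsMonoCopy (⊤ : SimpleGraph (Fin (n + 5 * c * (5 ^ ((k - 2) / 2) - 1) - d * (k - 2)))) χ (kipasG m)) ∧
    Ramsey2 (kipasG m) + 5 * c * (5 ^ ((k - 2) / 2) - 1) - d * (k - 2) ≤
      GallaiRamsey k (kipasG m) := by
  exact kipas_gallai_lower_even_k_odd_m_general hk hke (by lia) (by lia) h2
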